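/- Factoring out the exchange law: suppose that for each hypothesis e ≤ f ∈ H either e = 1 or e = a for some letter a ∈ Σ. Then H ∪ exch factorises into exch and H, i.e., H ∪ exch implies both exch and H, and cl_{H ∪ exch}(L) = cl_H(cl_exch(L)) for all L ⊆ SP. -/

import Mathlib

namespace CKAH

open Classical

/-! ### Labelled posets and pomsets -/

/-- A labelled poset over alphabet `A`: a finite carrier with a partial order and labelling. -/
structure LPoset (A : Type) : Type 1 where
  carrier : Type
  [fin : Fintype carrier]
  [ord : PartialOrder carrier]
  lab : carrier → A

attribute [instance] LPoset.fin LPoset.ord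

/-- Isomorphism of labelled posets: an order isomorphism preserving labels. -/
def LPoset.Iso {A : Type} (u v : LPoset A) : Prop :=
  ∃ e : u.carrier ≃o v.carrier, ∀ x, v.lab (e x) = u.lab x

theorem LPoset.iso_equivalence (A : Type) : Equivalence (LPoset.Iso (A := A)) where
  refl u := ⟨OrderIso.refl _, fun _ => rfl⟩
  symm := by
    rintro u v ⟨e, he⟩
    exact ⟨e.symm, fun x => by rw [← he (e.symm x), OrderIso.apply_symm_apply]⟩
  trans := by
    rintro u v w ⟨e, he⟩ ⟨f, hf⟩
    exact ⟨e.trans f, fun x => by rw [OrderIso.trans_apply, hf, he]⟩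

instance pomSetoid (A : Type) : Setoid (LPoset A) := ⟨LPoset.Iso, LPoset.iso_equivalence A⟩

/-- A pomset is an isomorphism class of labelled posets. -/
def Pomset (A : Type) : Type 1 := Quotient (pomSetoid A)

/-- Sequential composition of labelled posets: disjoint union, everything on the left
below everything on the right (lexicographic sum order). -/
def LPoset.seqL {A : Type} (u v : LPoset A) : LPoset A where
  carrier := u.carrier ⊕ₗ v.carrier
  fin := inferInstanceAs (Fintype (u.carrier ⊕ v.carrier))
  lab := fun x => Sum.elim u.lab v.lab (ofLex x)

/-- Parallel composition of labelled posets: disjoint union with no cross ordering. -/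
def LPoset.parL {A : Type} (u v : LPoset A) : LPoset A where
  carrier := u.carrier ⊕ v.carrier
  lab := Sum.elim u.lab v.lab

def Pomset.seq {A : Type} : Pomset A → Pomset A → Pomset A :=
  Quotient.map₂ LPoset.seqL (by
    rintro u₁ u₂ ⟨e, he⟩ v₁ v₂ ⟨f, hf⟩
    refine ⟨(RelIso.sumLexCongr e f :
      (u₁.carrier ⊕ₗ v₁.carrier) ≃o (u₂.carrier ⊕ₗ v₂.carrier)), ?_⟩
    rintro (x | x)
    · exact he x
    · exact hf x)

/-- Order isomorphism between disjoint-union orders, from component isomorphisms. -/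
def sumOrderIso {α β γ δ : Type} [PartialOrder α] [PartialOrder β] [PartialOrder γ]
    [PartialOrder δ] (e : α ≃o γ) (f : β ≃o δ) : (α ⊕ β) ≃o (γ ⊕ δ) where
  toEquiv := Equiv.sumCongr e.toEquiv f.toEquiv
  map_rel_iff' := by
    rintro (x | x) (y | y) <;> simp [Sum.le_def, e.le_iff_le, f.le_iff_le]

def Pomset.par {A : Type} : Pomset A → Pomset A → Pomset A :=
  Quotient.map₂ LPoset.parL (by
    rintro u₁ u₂ ⟨e, he⟩ v₁ v₂ ⟨f, hf⟩
    refine ⟨sumOrderIso e f, ?_⟩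
    rintro (x | x)
    · exact he x
    · exact hf x)

def LPoset.emptyL (A : Type) : LPoset A := { carrier := Fin 0, lab := fun x => x.elim0 }

def LPoset.singleL {A : Type} (a : A) : LPoset A := { carrier := PUnit, lab := fun _ => a }

/-- The empty pomset `1`. -/
def Pomset.empty (A : Type) : Pomset A := ⟦LPoset.emptyL A⟧

/-- The single-letter pomset. -/
def Pomset.single {A : Type} (a : A) : Pomset A := ⟦LPoset.singleL a⟧

/-- Subsumption on labelled posets: `u ⊑ v` iff there is a label-preserving
order-preserving bijection from the carrier of `v` to that of `u`. -/
def LPoset.subL {A : Type} (u v : LPoset A) : Prop :=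
  ∃ h : v.carrier ≃ u.carrier,
    (∀ x, u.lab (h x) = v.lab x) ∧ ∀ x y : v.carrier, x ≤ y → h x ≤ h y

/-- Subsumption of pomsets: `Pomset.sub U V` means `U ⊑ V`. -/
def Pomset.sub {A : Type} : Pomset A → Pomset A → Prop :=
  Quotient.lift₂ LPoset.subL (by
    rintro u₁ v₁ u₂ v₂ ⟨e, he⟩ ⟨f, hf⟩
    refine propext ⟨?_, ?_⟩
    · rintro ⟨h, hl, hm⟩
      refine ⟨(f.toEquiv.symm.trans h).trans e.toEquiv, fun x => ?_, fun x y hxy => ?_⟩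
      · show u₂.lab (e (h (f.symm x))) = v₂.lab x
        rw [he, hl, ← hf (f.symm x), OrderIso.apply_symm_apply]
      · simp only [Equiv.trans_apply]
        exact e.le_iff_le.mpr (hm _ _ (f.symm.le_iff_le.mpr hxy))
    · rintro ⟨h, hl, hm⟩
      refine ⟨(f.toEquiv.trans h).trans e.toEquiv.symm, fun x => ?_, fun x y hxy => ?_⟩
      · show u₁.lab (e.symm (h (f x))) = v₁.lab x
        rw [← he (e.symm (h (f x))), OrderIso.apply_symm_apply, hl, hf]
      · simp only [Equiv.trans_apply]
        exact e.symm.le_iff_le.mpr (hm _ _ (f.le_iff_le.mpr hxy)))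

def LPoset.isWordL {A : Type} (u : LPoset A) : Prop := ∀ x y : u.carrier, x ≤ y ∨ y ≤ x

/-- A pomset is a word when it is totally ordered. -/
def Pomset.IsWord {A : Type} : Pomset A → Prop :=
  Quotient.lift LPoset.isWordL (by
    rintro u v ⟨e, -⟩
    refine propext ⟨fun h x y => ?_, fun h x y => ?_⟩
    · rcases h (e.symm x) (e.symm y) with h' | h'
      · exact Or.inl (e.symm.le_iff_le.mp h')
      · exact Or.inr (e.symm.le_iff_le.mp h')
    · rcases h (e x) (e y) with h' | h'
      · exact Or.inl (e.le_iff_le.mp h')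
      · exact Or.inr (e.le_iff_le.mp h'))

def LPoset.mapL {A B : Type} (f : A → B) (u : LPoset A) : LPoset B :=
  { carrier := u.carrier, lab := f ∘ u.lab }

/-- Relabelling of pomsets along a function on letters. -/
def Pomset.map {A B : Type} (f : A → B) : Pomset A → Pomset B :=
  Quotient.map (LPoset.mapL f)
    (by rintro u v ⟨e, he⟩; exact ⟨e, fun x => congrArg f (he x)⟩)

def LPoset.overL {A : Type} (Γ : Set A) (u : LPoset A) : Prop := ∀ x, u.lab x ∈ Γ

/-- All labels of the pomset belong to `Γ`. -/
def Pomset.Over {A : Type} (Γ : Set A) : Pomset A → Prop :=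
  Quotient.lift (LPoset.overL Γ) (by
    rintro u v ⟨e, he⟩
    refine propext ⟨fun h x => ?_, fun h x => ?_⟩
    · have h2 := he (e.symm x)
      rw [OrderIso.apply_symm_apply] at h2
      rw [h2]; exact h _
    · rw [← he x]; exact h _)

/-- Series-parallel pomsets. -/
inductive Pomset.IsSP {A : Type} : Pomset A → Prop
  | empty : Pomset.IsSP (Pomset.empty A)
  | single (a : A) : Pomset.IsSP (Pomset.single a)
  | seq {U V : Pomset A} : Pomset.IsSP U → Pomset.IsSP V → Pomset.IsSP (Pomset.seq U V)
  | par {U V : Pomset A} : Pomset.IsSP U → Pomset.IsSP V → Pomset.IsSP (Pomset.par U V)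

def SPset (A : Type) : Set (Pomset A) := {U | U.IsSP}

/-! ### Pomset contexts -/

/-- Contexts are pomsets over `Option A`, where `none` plays the role of `*`.
`uniqueStarL` says there is exactly one `*`-labelled node. -/
def LPoset.uniqueStarL {A : Type} (c : LPoset (Option A)) : Prop := ∃! x, c.lab x = none

theorem LPoset.uniqueStarL_congr {A : Type} {u v : LPoset (Option A)}
    (e : u.carrier ≃o v.carrier) (he : ∀ x, v.lab (e x) = u.lab x) :
    u.uniqueStarL ↔ v.uniqueStarL := by
  constructor
  · rintro ⟨x, hx, hux⟩
    refine ⟨e x, show v.lab (e x) = none by rw [he]; exact hx, fun y hy => ?_⟩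
    have h2 := he (e.symm y)
    rw [OrderIso.apply_symm_apply] at h2
    have h3 : e.symm y = x := hux _ (h2.symm.trans hy)
    rw [← h3, OrderIso.apply_symm_apply]
  · rintro ⟨x, hx, hvx⟩
    refine ⟨e.symm x, ?_, fun y hy => ?_⟩
    · show u.lab (e.symm x) = none
      have h2 := he (e.symm x)
      rw [OrderIso.apply_symm_apply] at h2
      rw [← h2]; exact hx
    · have h3 : e y = x := hvx _ (show v.lab (e y) = none by rw [he]; exact hy)
      rw [← h3, OrderIso.symm_apply_apply]

/-- A pomset context: exactly one node labelled `*`. -/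
def Pomset.IsCtx {A : Type} : Pomset (Option A) → Prop :=
  Quotient.lift LPoset.uniqueStarL
    (fun _ _ h => propext (LPoset.uniqueStarL_congr h.choose h.choose_spec))

/-- Series-parallel pomset contexts. -/
def Pomset.IsSPCtx {A : Type} (C : Pomset (Option A)) : Prop := C.IsCtx ∧ C.IsSP

/-- Sequential (totally ordered) pomset contexts. -/
def Pomset.IsSeqCtx {A : Type} (C : Pomset (Option A)) : Prop := C.IsCtx ∧ C.IsWord

/-- The trivial context `*`. -/
def starCtx (A : Type) : Pomset (Option A) := Pomset.single (none : Option A)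

theorem option_get_eq_get {α : Type} {o₁ o₂ : Option α} (h : o₁ = o₂) (h₁ : o₁.isSome)
    (h₂ : o₂.isSome) : o₁.get h₁ = o₂.get h₂ := by subst h; rfl

/-- The order of `C[U]`: the orders of `C` (restricted away from `*`) and of `U`, with a
point of `C` below (resp. above) all of `U` when it is below (resp. above) the unique
`*`-node of `C`.  (For well-definedness of the order, the cross-relations are guarded by
the requirement that the star node is unique, which holds for every genuine context.) -/
def LPoset.insLe {A : Type} (c : LPoset (Option A)) (u : LPoset A) :
    ({x : c.carrier // c.lab x ≠ none} ⊕ u.carrier) →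
    ({x : c.carrier // c.lab x ≠ none} ⊕ u.carrier) → Prop
  | Sum.inl x, Sum.inl y => x.val ≤ y.val
  | Sum.inr x, Sum.inr y => x ≤ y
  | Sum.inl x, Sum.inr _ => c.uniqueStarL ∧ ∃ s, c.lab s = none ∧ x.val ≤ s
  | Sum.inr _, Sum.inl y => c.uniqueStarL ∧ ∃ s, c.lab s = none ∧ s ≤ y.val

/-- Insertion of a labelled poset `u` into the gap of a context `c`: the `*`-labelled
node is removed and `u` is put in its place, inheriting the order relations of `*`. -/
noncomputable def LPoset.insL {A : Type} (c : LPoset (Option A)) (u : LPoset A) :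
    LPoset A where
  carrier := {x : c.carrier // c.lab x ≠ none} ⊕ u.carrier
  fin := by classical exact inferInstance
  ord :=
    { le := LPoset.insLe c u
      lt := fun p q => LPoset.insLe c u p q ∧ ¬ LPoset.insLe c u q p
      lt_iff_le_not_ge := fun _ _ => Iff.rfl
      le_refl := by rintro (x | x) <;> exact le_refl _
      le_trans := by
        rintro (x | x) (y | y) (z | z) h1 h2
        · exact le_trans h1 h2
        · obtain ⟨hu, s, hs, hys⟩ := h2
          exact ⟨hu, s, hs, le_trans h1 hys⟩
        · obtain ⟨hu, s, hs, hxs⟩ := h1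
          obtain ⟨-, t, ht, htz⟩ := h2
          obtain ⟨w, hw, huniq⟩ := hu
          have hst : s = t := (huniq s hs).trans (huniq t ht).symm
          exact le_trans (hst ▸ hxs) htz
        · exact h1
        · obtain ⟨hu, s, hs, hsy⟩ := h1
          exact ⟨hu, s, hs, le_trans hsy h2⟩
        · obtain ⟨hu, s, hs, hsy⟩ := h1
          obtain ⟨-, t, ht, hyt⟩ := h2
          obtain ⟨w, hw, huniq⟩ := hu
          have hst : s = t := (huniq s hs).trans (huniq t ht).symm
          have hy : y.val = s := le_antisymm (hst.symm ▸ hyt) hsy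
          exact absurd (hy.symm ▸ hs) y.prop
        · exact h2
        · exact le_trans h1 h2
      le_antisymm := by
        rintro (x | x) (y | y) h1 h2
        · exact congrArg Sum.inl (Subtype.ext (le_antisymm h1 h2))
        · obtain ⟨hu, s, hs, hxs⟩ := h1
          obtain ⟨-, t, ht, htx⟩ := h2
          obtain ⟨w, hw, huniq⟩ := hu
          have hst : s = t := (huniq s hs).trans (huniq t ht).symm
          have hx : x.val = s := le_antisymm hxs (hst.symm ▸ htx)
          exact absurd (hx.symm ▸ hs) x.prop
        · obtain ⟨hu, s, hs, hsy⟩ := h1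
          obtain ⟨-, t, ht, hyt⟩ := h2
          obtain ⟨w, hw, huniq⟩ := hu
          have hst : s = t := (huniq s hs).trans (huniq t ht).symm
          have hy : y.val = s := le_antisymm (hst.symm ▸ hyt) hsy
          exact absurd (hy.symm ▸ hs) y.prop
        · exact congrArg Sum.inr (le_antisymm h1 h2) }
  lab := Sum.elim (fun x => (c.lab x.val).get (Option.isSome_iff_ne_none.mpr x.prop)) u.lab

/-- `Pomset.ins C U` is `C[U]`: plugging the pomset `U` into the gap of the context `C`. -/
noncomputable def Pomset.ins {A : Type} : Pomset (Option A) → Pomset A → Pomset A :=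
  Quotient.map₂ LPoset.insL (by
    rintro c₁ c₂ ⟨e, he⟩ u₁ u₂ ⟨f, hf⟩
    have hstar : c₁.uniqueStarL ↔ c₂.uniqueStarL := LPoset.uniqueStarL_congr e he
    refine ⟨{ toEquiv := Equiv.sumCongr
                (e.toEquiv.subtypeEquiv fun x => by
                  rw [show c₂.lab (e.toEquiv x) = c₁.lab x from he x]) f.toEquiv
              map_rel_iff' := ?_ }, ?_⟩
    · rintro (x | x) (y | y)
      · exact e.le_iff_le
      · show (c₂.uniqueStarL ∧ ∃ s, c₂.lab s = none ∧ (e x.val : c₂.carrier) ≤ s) ↔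
             (c₁.uniqueStarL ∧ ∃ s, c₁.lab s = none ∧ x.val ≤ s)
        constructor
        · rintro ⟨hu, s, hs, hxs⟩
          refine ⟨hstar.mpr hu, e.symm s, ?_, ?_⟩
          · have h2 := he (e.symm s)
            rw [OrderIso.apply_symm_apply] at h2
            rw [← h2]; exact hs
          · exact e.le_iff_le.mp (by rw [OrderIso.apply_symm_apply]; exact hxs)
        · rintro ⟨hu, s, hs, hxs⟩
          exact ⟨hstar.mp hu, e s, by rw [he]; exact hs, e.le_iff_le.mpr hxs⟩
      · show (c₂.uniqueStarL ∧ ∃ s, c₂.lab s = none ∧ s ≤ (e y.val : c₂.carrier)) ↔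
             (c₁.uniqueStarL ∧ ∃ s, c₁.lab s = none ∧ s ≤ y.val)
        constructor
        · rintro ⟨hu, s, hs, hsy⟩
          refine ⟨hstar.mpr hu, e.symm s, ?_, ?_⟩
          · have h2 := he (e.symm s)
            rw [OrderIso.apply_symm_apply] at h2
            rw [← h2]; exact hs
          · exact e.le_iff_le.mp (by rw [OrderIso.apply_symm_apply]; exact hsy)
        · rintro ⟨hu, s, hs, hsy⟩
          exact ⟨hstar.mp hu, e s, by rw [he]; exact hs, e.le_iff_le.mpr hsy⟩
      · exact f.le_iff_le
    · rintro (x | x)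
      · exact option_get_eq_get (he x.val) _ _
      · exact hf x)

/-! ### Pomset languages -/

abbrev Lang (A : Type) := Set (Pomset A)

def Lang.seq {A : Type} (L K : Lang A) : Lang A :=
  {W | ∃ U ∈ L, ∃ V ∈ K, W = Pomset.seq U V}

def Lang.par {A : Type} (L K : Lang A) : Lang A :=
  {W | ∃ U ∈ L, ∃ V ∈ K, W = Pomset.par U V}

def Lang.pow {A : Type} (L : Lang A) : ℕ → Lang A
  | 0 => {Pomset.empty A}
  | n + 1 => Lang.seq (Lang.pow L n) L

def Lang.star {A : Type} (L : Lang A) : Lang A := ⋃ n, L.pow n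

/-- Application of a context to a language: `C[L] = {C[U] : U ∈ L}`. -/
def Ctx.img {A : Type} (C : Pomset (Option A)) (L : Lang A) : Lang A :=
  {W | ∃ U ∈ L, W = C.ins U}

/-! ### CKA terms and semantics -/

inductive Term (A : Type) : Type
  | zero : Term A
  | one : Term A
  | var : A → Term A
  | add : Term A → Term A → Term A
  | seq : Term A → Term A → Term A
  | par : Term A → Term A → Term A
  | star : Term A → Term A

/-- Pomset language semantics of CKA terms. -/
def Term.lang {A : Type} : Term A → Lang A
  | .zero => ∅
  | .one => {Pomset.empty A}
  | .var a => {Pomset.single a}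
  | .add e f => e.lang ∪ f.lang
  | .seq e f => Lang.seq e.lang f.lang
  | .par e f => Lang.par e.lang f.lang
  | .star e => Lang.star e.lang

/-- Sets of hypotheses: a hypothesis `e ≤ f` is the pair `(e, f)`. -/
abbrev HypSet (A : Type) := Set (Term A × Term A)

/-- The congruence `≡^H` on CKA terms generated by the CKA axioms and the hypotheses `H`
(the constructor `hyp` encodes `e ≦^H f`, i.e. `e + f ≡^H f`, for `e ≤ f ∈ H`). -/
inductive CongH {A : Type} (H : HypSet A) : Term A → Term A → Prop
  | refl (e) : CongH H e e
  | symm {e f} : CongH H e f → CongH H f e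
  | trans {e f g} : CongH H e f → CongH H f g → CongH H e g
  | addCong {e e' f f'} : CongH H e e' → CongH H f f' → CongH H (.add e f) (.add e' f')
  | seqCong {e e' f f'} : CongH H e e' → CongH H f f' → CongH H (.seq e f) (.seq e' f')
  | parCong {e e' f f'} : CongH H e e' → CongH H f f' → CongH H (.par e f) (.par e' f')
  | starCong {e e'} : CongH H e e' → CongH H (.star e) (.star e')
  | addZero (e) : CongH H (.add e .zero) e
  | addIdem (e) : CongH H (.add e e) e
  | addComm (e f) : CongH H (.add e f) (.add f e)
  | addAssoc (e f g) : CongH H (.add e (.add f g)) (.add (.add e f) g)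
  | seqAssoc (e f g) : CongH H (.seq e (.seq f g)) (.seq (.seq e f) g)
  | seqDistL (e f g) : CongH H (.seq e (.add f g)) (.add (.seq e f) (.seq e g))
  | seqDistR (e f g) : CongH H (.seq (.add e f) g) (.add (.seq e g) (.seq f g))
  | seqOneR (e) : CongH H (.seq e .one) e
  | seqOneL (e) : CongH H (.seq .one e) e
  | seqZeroR (e) : CongH H (.seq e .zero) .zero
  | seqZeroL (e) : CongH H (.seq .zero e) .zero
  | parComm (e f) : CongH H (.par e f) (.par f e)
  | parOne (e) : CongH H (.par e .one) e
  | parZero (e) : CongH H (.par e .zero) .zero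
  | parAssoc (e f g) : CongH H (.par e (.par f g)) (.par (.par e f) g)
  | parDist (e f g) : CongH H (.par e (.add f g)) (.add (.par e f) (.par e g))
  | starUnfoldL (e) : CongH H (.add .one (.seq e (.star e))) (.star e)
  | starUnfoldR (e) : CongH H (.add .one (.seq (.star e) e)) (.star e)
  | lfpL {e f g} : CongH H (.add (.add e (.seq f g)) g) g →
      CongH H (.add (.seq (.star f) e) g) g
  | lfpR {e f g} : CongH H (.add (.add e (.seq f g)) f) f →
      CongH H (.add (.seq e (.star g)) f) f
  | hyp {e f} : (e, f) ∈ H → CongH H (.add e f) f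

/-- `e ≦^H f`, the natural order `e + f ≡^H f`. -/
def LeH {A : Type} (H : HypSet A) (e f : Term A) : Prop := CongH H (.add e f) f

/-- The `H`-closure of a pomset language, as an inductive predicate: the smallest language
containing `L` such that for all `e ≤ f ∈ H` and series-parallel contexts `C`,
if `C[⟦f⟧] ⊆ cl` then `C[⟦e⟧] ⊆ cl`. -/
inductive closure {A : Type} (H : HypSet A) (L : Lang A) : Pomset A → Prop
  | base {U} : U ∈ L → closure H L U
  | step {e f : Term A} (hef : (e, f) ∈ H) {C : Pomset (Option A)} (hC : C.IsSPCtx)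
      (hf : ∀ V ∈ f.lang, closure H L (C.ins V)) {U} (hU : U ∈ e.lang) :
      closure H L (C.ins U)

/-- `cl H L` is the `H`-closure of `L`. -/
def cl {A : Type} (H : HypSet A) (L : Lang A) : Lang A := {U | closure H L U}

/-- The sequential closure: like `cl` but only sequential contexts are used. -/
inductive seqClosure {A : Type} (H : HypSet A) (L : Lang A) : Pomset A → Prop
  | base {U} : U ∈ L → seqClosure H L U
  | step {e f : Term A} (hef : (e, f) ∈ H) {C : Pomset (Option A)} (hC : C.IsSeqCtx)
      (hf : ∀ V ∈ f.lang, seqClosure H L (C.ins V)) {U} (hU : U ∈ e.lang) :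
      seqClosure H L (C.ins U)

def seqCl {A : Type} (H : HypSet A) (L : Lang A) : Lang A := {U | seqClosure H L U}

/-! ### Implication, completeness, reductions -/

/-- `H` implies `H'`: every hypothesis of `H'` is derivable from `H`. -/
def Implies {A : Type} (H H' : HypSet A) : Prop := ∀ p ∈ H', LeH H p.1 p.2

/-- `H` is complete: semantic equivalence implies axiomatic equivalence. -/
def Complete {A : Type} (H : HypSet A) : Prop :=
  ∀ e f : Term A, cl H e.lang = cl H f.lang → CongH H e f

/-- A reduction from `H` to `H'` (presupposing that `H` implies `H'`). -/
structure IsReduction {A : Type} (H H' : HypSet A) (r : Term A → Term A) : Prop where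
  implies : Implies H H'
  equiv : ∀ e, CongH H e (r e)
  reflect : ∀ e f : Term A, cl H e.lang = cl H f.lang → cl H' (r e).lang = cl H' (r f).lang

def Reduces {A : Type} (H H' : HypSet A) : Prop := ∃ r, IsReduction H H' r

/-- A strong reduction from `H` to `H'`. -/
structure IsStrongReduction {A : Type} (H H' : HypSet A) (r : Term A → Term A)
    extends IsReduction H H' r : Prop where
  strong : ∀ e : Term A, cl H e.lang = cl H' (r e).lang

def StronglyReduces {A : Type} (H H' : HypSet A) : Prop := ∃ r, IsStrongReduction H H' r

/-- `H` factorises into `H₀` and `H₁`. -/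
def Factorises {A : Type} (H H₀ H₁ : HypSet A) : Prop :=
  Implies H H₀ ∧ Implies H H₁ ∧ ∀ L : Lang A, L ⊆ SPset A → cl H L = cl H₁ (cl H₀ L)

/-! ### The exchange hypotheses and sp-subsumption -/

/-- The exchange hypotheses `(e∥f)·(g∥h) ≤ (e·g)∥(f·h)`. -/
def exch (A : Type) : HypSet A :=
  {p | ∃ e f g h : Term A,
    p = (Term.seq (.par e f) (.par g h), Term.par (.seq e g) (.seq f h))}

/-- `⊑^sp`: the smallest precongruence on series-parallel pomsets satisfying the
exchange inequality. -/
inductive spSub {A : Type} : Pomset A → Pomset A → Prop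
  | refl {U : Pomset A} : U.IsSP → spSub U U
  | trans {U V W} : spSub U V → spSub V W → spSub U W
  | seqCong {U V U' V'} : spSub U V → spSub U' V' → spSub (Pomset.seq U U') (Pomset.seq V V')
  | parCong {U V U' V'} : spSub U V → spSub U' V' → spSub (Pomset.par U U') (Pomset.par V V')
  | exch {U V W X : Pomset A} : U.IsSP → V.IsSP → W.IsSP → X.IsSP →
      spSub (Pomset.seq (Pomset.par U V) (Pomset.par W X))
            (Pomset.par (Pomset.seq U W) (Pomset.seq V X))

/-! ### KA terms, grounded hypotheses, sequential reductions -/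

/-- A term is a KA term when it contains no `∥`. -/
def Term.noPar {A : Type} : Term A → Prop
  | .zero => True
  | .one => True
  | .var _ => True
  | .add e f => e.noPar ∧ f.noPar
  | .seq e f => e.noPar ∧ f.noPar
  | .par _ _ => False
  | .star e => e.noPar

/-- A non-empty word. -/
def IsNonemptyWord {A : Type} (W : Pomset A) : Prop := W.IsWord ∧ W ≠ Pomset.empty A

/-- A set of hypotheses is grounded when in each hypothesis `e ≤ f`, `e` is a KA term and
`⟦f⟧ = {W}` for a non-empty word `W`. -/
def Grounded {A : Type} (H : HypSet A) : Prop :=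
  ∀ p ∈ H, p.1.noPar ∧ ∃ W : Pomset A, IsNonemptyWord W ∧ p.2.lang = {W}

/-- `≡_KA^H`: the congruence on terms generated by the axioms of `≡` not involving `∥`
together with the hypotheses of `H`. -/
inductive KACong {A : Type} (H : HypSet A) : Term A → Term A → Prop
  | refl (e) : KACong H e e
  | symm {e f} : KACong H e f → KACong H f e
  | trans {e f g} : KACong H e f → KACong H f g → KACong H e g
  | addCong {e e' f f'} : KACong H e e' → KACong H f f' → KACong H (.add e f) (.add e' f')
  | seqCong {e e' f f'} : KACong H e e' → KACong H f f' → KACong H (.seq e f) (.seq e' f')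
  | starCong {e e'} : KACong H e e' → KACong H (.star e) (.star e')
  | addZero (e) : KACong H (.add e .zero) e
  | addIdem (e) : KACong H (.add e e) e
  | addComm (e f) : KACong H (.add e f) (.add f e)
  | addAssoc (e f g) : KACong H (.add e (.add f g)) (.add (.add e f) g)
  | seqAssoc (e f g) : KACong H (.seq e (.seq f g)) (.seq (.seq e f) g)
  | seqDistL (e f g) : KACong H (.seq e (.add f g)) (.add (.seq e f) (.seq e g))
  | seqDistR (e f g) : KACong H (.seq (.add e f) g) (.add (.seq e g) (.seq f g))
  | seqOneR (e) : KACong H (.seq e .one) e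
  | seqOneL (e) : KACong H (.seq .one e) e
  | seqZeroR (e) : KACong H (.seq e .zero) .zero
  | seqZeroL (e) : KACong H (.seq .zero e) .zero
  | starUnfoldL (e) : KACong H (.add .one (.seq e (.star e))) (.star e)
  | starUnfoldR (e) : KACong H (.add .one (.seq (.star e) e)) (.star e)
  | lfpL {e f g} : KACong H (.add (.add e (.seq f g)) g) g →
      KACong H (.add (.seq (.star f) e) g) g
  | lfpR {e f g} : KACong H (.add (.add e (.seq f g)) f) f →
      KACong H (.add (.seq e (.star g)) f) f
  | hyp {e f} : (e, f) ∈ H → KACong H (.add e f) f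

/-- A sequential reduction from `H` to `H'`. -/
structure IsSeqReduction {A : Type} (H H' : HypSet A) (r : Term A → Term A) : Prop where
  implies : Implies H H'
  equiv : ∀ e : Term A, e.noPar → KACong H e (r e)
  closure_eq : ∀ e : Term A, e.noPar → seqCl H e.lang = seqCl H' (r e).lang

/-- Extension of a map on (KA) terms to all CKA terms, homomorphically on `∥`. -/
def parExt {A : Type} (r : Term A → Term A) : Term A → Term A
  | .par e f => .par (parExt r e) (parExt r f)
  | e => r e

/-! ### Inductive characterisation of sp contexts -/

/-- The generators of series-parallel contexts (Lemma: `PC^sp` is the smallest such set). -/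
inductive GenCtx {A : Type} : Pomset (Option A) → Prop
  | star : GenCtx (Pomset.single (none : Option A))
  | seqL {U : Pomset A} {C} : U.IsSP → GenCtx C → GenCtx (Pomset.seq (Pomset.map some U) C)
  | seqR {C} {V : Pomset A} : GenCtx C → V.IsSP → GenCtx (Pomset.seq C (Pomset.map some V))
  | par {U : Pomset A} {C} : U.IsSP → GenCtx C → GenCtx (Pomset.par (Pomset.map some U) C)

/-! ### Reification -/

/-- Homomorphic extension of a letter map to terms. -/
def rTerm {A : Type} (r : A → Term A) : Term A → Term A
  | .zero => .zero
  | .one => .one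
  | .var a => r a
  | .add e f => .add (rTerm r e) (rTerm r f)
  | .seq e f => .seq (rTerm r e) (rTerm r f)
  | .par e f => .par (rTerm r e) (rTerm r f)
  | .star e => .star (rTerm r e)

/-- All letters of a term lie in `Γ`. -/
def TermOver {A : Type} (Γ : Set A) : Term A → Prop
  | .zero => True
  | .one => True
  | .var a => a ∈ Γ
  | .add e f => TermOver Γ e ∧ TermOver Γ f
  | .seq e f => TermOver Γ e ∧ TermOver Γ f
  | .par e f => TermOver Γ e ∧ TermOver Γ f
  | .star e => TermOver Γ e

/-- Extension of a letter map `r` to (series-parallel) pomsets, as a relation: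
`rMap r U V` means `V ∈ r(U)`. -/
inductive rMap {A : Type} (r : A → Term A) : Pomset A → Pomset A → Prop
  | one : rMap r (Pomset.empty A) (Pomset.empty A)
  | var (a : A) {V} : V ∈ (r a).lang → rMap r (Pomset.single a) V
  | seq {U U' V V'} : rMap r U V → rMap r U' V' →
      rMap r (Pomset.seq U U') (Pomset.seq V V')
  | par {U U' V V'} : rMap r U V → rMap r U' V' →
      rMap r (Pomset.par U U') (Pomset.par V V')

/-- Image of a language under (the pomset extension of) `r`. -/
def rImg {A : Type} (r : A → Term A) (L : Lang A) : Lang A := {V | ∃ U ∈ L, rMap r U V}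

/-- Series-parallel pomsets over the subalphabet `Γ`. -/
def SPover {A : Type} (Γ : Set A) : Lang A := {U | U.IsSP ∧ U.Over Γ}

/-- `r : Σ → Term Γ` is a reification from `H` to `H'`. -/
structure IsReification {A : Type} (Γ : Set A) (H H' : HypSet A) (r : A → Term A) : Prop where
  toGamma : ∀ a : A, TermOver Γ (r a)
  equiv : ∀ a : A, CongH H (r a) (.var a)
  expansive : ∀ a ∈ Γ, LeH (∅ : HypSet A) (.var a) (r a)
  preserves : ∀ L : Lang A, L ⊆ SPover Γ → cl H' L ⊆ SPover Γ
  hyps : ∀ p ∈ H, LeH H' (rTerm r p.1) (rTerm r p.2)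

end CKAH

/-!
The language `cl H (cl exch L)` is closed under subsumption between series-parallel pomsets.
For members of `cl exch L` this is Gischer's theorem: such subsumptions are generated by the
exchange law. For a pomset `C[V]` added by a hypothesis, with `V` empty or a single letter, a
subsumption `U ⊑ C[V]` lifts to the context: there is a series-parallel `D` with `D[V] = U` and
`D[W] ⊑ C[W]` for all `W`, so the same hypothesis applied in `D` yields `U`. When `V` is a letter,
`D` is `U` with that letter replaced by `*`; when `V` is empty, the point `*` has to be inserted
into the order of `U`, above the points below `*` in `C` and below the points above it, and this
is possible without leaving the series-parallel orders. As every exchange step is itself a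
subsumption, `cl H (cl exch L)` absorbs the exchange hypotheses.
-/

namespace CKAH

/-! ### Series-parallel orders -/

section IsSPOn

variable {X Y : Type*} {r o : X → X → Prop} {S T : Set X}

/-- Under `r`, the sets `S` and `T` are composed in series, `S` first (`b = true`), or in
parallel (`b = false`). The flag lets both compositions be treated at once. -/
def ComposedBy (b : Bool) (r : X → X → Prop) (S T : Set X) : Prop :=
  ∀ x ∈ S, ∀ y ∈ T, (r x y ↔ b) ∧ ¬ r y x

/-- `r` restricts to a series-parallel partial order on the set `S`. -/
inductive IsSPOn (r : X → X → Prop) : Set X → Prop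
  | empty : IsSPOn r ∅
  | single {x : X} : r x x → IsSPOn r {x}
  | comp (b : Bool) {S T : Set X} :
      IsSPOn r S → IsSPOn r T → ComposedBy b r S T → IsSPOn r (S ∪ T)

theorem IsSPOn.refl (h : IsSPOn r S) : ∀ x ∈ S, r x x := by
  induction h with
  | empty => exact fun _ hx => hx.elim
  | single hx => rintro _ rfl; exact hx
  | comp _ _ _ _ ihS ihT => rintro x (hx | hx); exacts [ihS x hx, ihT x hx]

theorem IsSPOn.antisymm (h : IsSPOn r S) : ∀ x ∈ S, ∀ y ∈ S, r x y → r y x → x = y := by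
  induction h with
  | empty => exact fun _ hx => hx.elim
  | single hx => rintro _ rfl _ rfl _ _; rfl
  | comp b _ _ hST ihS ihT =>
    rintro x (hx | hx) y (hy | hy) hxy hyx
    · exact ihS x hx y hy hxy hyx
    · exact absurd hyx (hST x hx y hy).2
    · exact absurd hxy (hST y hy x hx).2
    · exact ihT x hx y hy hxy hyx

theorem IsSPOn.trans (h : IsSPOn r S) :
    ∀ x ∈ S, ∀ y ∈ S, ∀ z ∈ S, r x y → r y z → r x z := by
  induction h with
  | empty => exact fun _ hx => hx.elim
  | single hx => rintro _ rfl _ rfl _ rfl _ _; exact hx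
  | comp b _ _ hST ihS ihT =>
    rintro x (hx | hx) y (hy | hy) z (hz | hz) hxy hyz
    · exact ihS x hx y hy z hz hxy hyz
    · exact (hST x hx z hz).1.2 ((hST y hy z hz).1.1 hyz)
    · exact absurd hyz (hST z hz y hy).2
    · exact (hST x hx z hz).1.2 ((hST x hx y hy).1.1 hxy)
    · exact absurd hxy (hST y hy x hx).2
    · exact absurd hxy (hST y hy x hx).2
    · exact absurd hyz (hST z hz y hy).2
    · exact ihT x hx y hy z hz hxy hyz

/-- The partial order given by a relation that is series-parallel on the whole type. -/
abbrev IsSPOn.partialOrder (h : IsSPOn r Set.univ) : PartialOrder X where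
  le := r
  le_refl x := h.refl x trivial
  le_trans x y z := h.trans x trivial y trivial z trivial
  le_antisymm x y := h.antisymm x trivial y trivial

theorem IsSPOn.notMem_of_composedBy {b : Bool} (hS : IsSPOn r S) (h : ComposedBy b r S T)
    {x : X} (hx : x ∈ T) : x ∉ S :=
  fun hxS => (h x hxS x hx).2 (hS.refl x hxS)

theorem IsSPOn.biUnion {q : Y → Y → Prop} {I : Set Y} (hI : IsSPOn q I) {F : Y → Set X}
    (hF : ∀ i ∈ I, IsSPOn r (F i))
    (hr : ∀ i ∈ I, ∀ j ∈ I, i ≠ j → ∀ x ∈ F i, ∀ y ∈ F j, (r x y ↔ q i j)) :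
    IsSPOn r (⋃ i ∈ I, F i) := by
  induction hI with
  | empty => rw [Set.biUnion_empty]; exact .empty
  | single _ => rw [Set.biUnion_singleton]; exact hF _ rfl
  | @comp b I J hI _ hIJ ihI ihJ =>
    rw [Set.biUnion_union]
    refine .comp b (ihI (fun i hi => hF i (.inl hi)) fun i hi j hj => hr i (.inl hi) j (.inl hj))
      (ihJ (fun i hi => hF i (.inr hi)) fun i hi j hj => hr i (.inr hi) j (.inr hj)) ?_
    intro x hx y hy
    obtain ⟨i, hi, hxi⟩ := Set.mem_iUnion₂.1 hx
    obtain ⟨j, hj, hyj⟩ := Set.mem_iUnion₂.1 hy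
    have hij : i ≠ j := fun hij => hI.notMem_of_composedBy hIJ hj (hij ▸ hi)
    rw [hr i (.inl hi) j (.inr hj) hij x hxi y hyj, hr j (.inr hj) i (.inl hi) hij.symm y hyj x hxi]
    exact hIJ i hi j hj

theorem IsSPOn.image {q : Y → Y → Prop} {I : Set Y} (hI : IsSPOn q I) (f : Y → X)
    (hf : ∀ i ∈ I, ∀ j ∈ I, (r (f i) (f j) ↔ q i j)) : IsSPOn r (f '' I) := by
  rw [← Set.biUnion_of_singleton (f '' I), Set.biUnion_image]
  refine hI.biUnion (fun i hi => .single ((hf i hi i hi).2 (hI.refl i hi))) ?_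
  rintro i hi j hj - _ rfl _ rfl
  exact hf i hi j hj

theorem IsSPOn.congr (hS : IsSPOn r S) (h : ∀ x ∈ S, ∀ y ∈ S, (o x y ↔ r x y)) : IsSPOn o S := by
  simpa only [Set.image_id] using hS.image id h

theorem IsSPOn.mono (hT : IsSPOn r T) (hST : S ⊆ T) : IsSPOn r S := by
  have hpart (x : X) (hx : x ∈ T) : IsSPOn r (S ∩ {x}) := by
    by_cases hxS : x ∈ S
    · rw [Set.inter_singleton_of_mem hxS]
      exact .single (hT.refl x hx)
    · rw [Set.inter_singleton_eq_empty.2 hxS]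
      exact .empty
  have hunion : ⋃ x ∈ T, S ∩ {x} = S := by
    rw [← Set.inter_iUnion₂, Set.biUnion_of_singleton, Set.inter_eq_left.2 hST]
  rw [← hunion]
  refine hT.biUnion hpart ?_
  rintro x - y - - _ ⟨-, rfl⟩ _ ⟨-, rfl⟩
  rfl

/-- The relation that is `r` on `S`, is `q` off `S`, and puts the points of `S` below the
others exactly when `b` is `true`. -/
def glue (S : Set X) (b : Bool) (r q : X → X → Prop) (x y : X) : Prop :=
  (x ∈ S ∧ y ∈ S ∧ r x y) ∨ (x ∉ S ∧ y ∉ S ∧ q x y) ∨ (x ∈ S ∧ y ∉ S ∧ b)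

theorem glue_of_mem {b : Bool} {q : X → X → Prop} {x y : X} (hx : x ∈ S) (hy : y ∈ S) :
    glue S b r q x y ↔ r x y := by
  simp [glue, hx, hy]

theorem glue_of_notMem {b : Bool} {q : X → X → Prop} {x y : X} (hx : x ∉ S) (hy : y ∉ S) :
    glue S b r q x y ↔ q x y := by
  simp [glue, hx, hy]

theorem composedBy_glue (b : Bool) (r q : X → X → Prop) (hST : ∀ x ∈ T, x ∉ S) :
    ComposedBy b (glue S b r q) S T :=
  fun x hx y hy => by simp [glue, hx, hST y hy]

theorem IsSPOn.glue (b : Bool) {q : X → X → Prop} (hS : IsSPOn r S) (hT : IsSPOn q T)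
    (hST : ∀ x ∈ T, x ∉ S) : IsSPOn (glue S b r q) (S ∪ T) :=
  .comp b (hS.congr fun _ hx _ hy => glue_of_mem hx hy)
    (hT.congr fun _ hx _ hy => glue_of_notMem (hST _ hx) (hST _ hy)) (composedBy_glue b r q hST)

theorem ComposedBy.agree {b : Bool} {d : X → X → Prop} (h : ComposedBy b r S T)
    (h' : ComposedBy b d S T) (hS : ∀ x ∈ S, ∀ y ∈ S, (d x y ↔ r x y))
    (hT : ∀ x ∈ T, ∀ y ∈ T, (d x y ↔ r x y)) :
    ∀ x ∈ S ∪ T, ∀ y ∈ S ∪ T, (d x y ↔ r x y) := by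
  rintro x (hx | hx) y (hy | hy)
  · exact hS x hx y hy
  · exact (h' x hx y hy).1.trans (h x hx y hy).1.symm
  · exact iff_of_false (h' y hy x hx).2 (h y hy x hx).2
  · exact hT x hx y hy

/-! ### Extending a series-parallel order by a point -/

/-- `d` extends the series-parallel order `r` on `S` by the point `s`, which lies above the
points of `S ∩ P` and below those of `S ∩ Q`. -/
structure IsPointExtension (r : X → X → Prop) (S : Set X) (s : X) (P Q : Set X)
    (d : X → X → Prop) : Prop where
  isSPOn : IsSPOn d (insert s S)
  agree : ∀ x ∈ S, ∀ y ∈ S, (d x y ↔ r x y)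
  below : ∀ x ∈ S, x ∈ P → d x s
  above : ∀ x ∈ S, x ∈ Q → d s x

section PointExtension

variable {s : X} {P Q : Set X} {d : X → X → Prop}

theorem IsSPOn.isPointExtension_top (hS : IsSPOn r S) (hs : s ∉ S) (hQ : ∀ x ∈ S, x ∉ Q) :
    IsPointExtension r S s P Q (CKAH.glue S true r Eq) where
  isSPOn := by
    rw [Set.insert_eq, Set.union_comm]
    exact hS.glue true (.single rfl) (by rintro _ rfl; exact hs)
  agree _ hx _ hy := glue_of_mem hx hy
  below x hx _ := .inr (.inr ⟨hx, hs, rfl⟩)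
  above x hx hxQ := absurd hxQ (hQ x hx)

theorem IsSPOn.isPointExtension_bot (hS : IsSPOn r S) (hs : s ∉ S) (hP : ∀ x ∈ S, x ∉ P) :
    IsPointExtension r S s P Q (CKAH.glue {s} true Eq r) := by
  have hne : ∀ x ∈ S, x ∉ ({s} : Set X) := by rintro x hx rfl; exact hs hx
  exact
    { isSPOn := IsSPOn.glue true (.single rfl) hS hne
      agree := fun x hx y hy => glue_of_notMem (hne x hx) (hne y hy)
      below := fun x hx hxP => absurd hxP (hP x hx)
      above := fun x hx _ => .inr (.inr ⟨rfl, hne x hx, rfl⟩) }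

theorem IsPointExtension.left {b : Bool} (hd : IsPointExtension r S s P Q d) (hT : IsSPOn r T)
    (hST : ComposedBy b r S T) (hdisj : ∀ x ∈ T, x ∉ insert s S)
    (hP : ∀ x ∈ T, x ∉ P) (hQ : ∀ x ∈ T, x ∈ Q → b) :
    IsPointExtension r (S ∪ T) s P Q (glue (insert s S) b d r) := by
  have hglue := composedBy_glue b d r hdisj
  have hs : s ∈ insert s S := Set.mem_insert s S
  have hmem {x : X} (hx : x ∈ S) : x ∈ insert s S := Set.mem_insert_of_mem s hx
  constructor
  · rw [← Set.insert_union]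
    exact hd.isSPOn.glue b hT hdisj
  · refine hST.agree (fun x hx => hglue x (hmem hx)) (fun x hx y hy => ?_) fun x hx y hy => ?_
    · exact (glue_of_mem (hmem hx) (hmem hy)).trans (hd.agree x hx y hy)
    · exact glue_of_notMem (hdisj x hx) (hdisj y hy)
  · rintro x (hx | hx) hxP
    · exact (glue_of_mem (hmem hx) hs).2 (hd.below x hx hxP)
    · exact absurd hxP (hP x hx)
  · rintro x (hx | hx) hxQ
    · exact (glue_of_mem hs (hmem hx)).2 (hd.above x hx hxQ)
    · exact (hglue s hs x hx).1.2 (hQ x hx hxQ)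

theorem IsPointExtension.right {b : Bool} (hd : IsPointExtension r T s P Q d) (hS : IsSPOn r S)
    (hST : ComposedBy b r S T) (hdisj : ∀ x ∈ insert s T, x ∉ S)
    (hP : ∀ x ∈ S, x ∈ P → b) (hQ : ∀ x ∈ S, x ∉ Q) :
    IsPointExtension r (S ∪ T) s P Q (glue S b r d) := by
  have hglue := composedBy_glue b r d hdisj
  have hs : s ∈ insert s T := Set.mem_insert s T
  have hmem {x : X} (hx : x ∈ T) : x ∈ insert s T := Set.mem_insert_of_mem s hx
  constructor
  · rw [← Set.union_insert]
    exact hS.glue b hd.isSPOn hdisj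
  · refine hST.agree (fun x hx y hy => hglue x hx y (hmem hy)) (fun x hx y hy => ?_)
      fun x hx y hy => ?_
    · exact glue_of_mem hx hy
    · exact (glue_of_notMem (hdisj x (hmem hx)) (hdisj y (hmem hy))).trans (hd.agree x hx y hy)
  · rintro x (hx | hx) hxP
    · exact (hglue x hx s hs).1.2 (hP x hx hxP)
    · exact (glue_of_notMem (hdisj x (hmem hx)) (hdisj s hs)).2 (hd.below x hx hxP)
  · rintro x (hx | hx) hxQ
    · exact absurd hxQ (hQ x hx)
    · exact (glue_of_notMem (hdisj s hs) (hdisj x (hmem hx))).2 (hd.above x hx hxQ)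

/-- Once some points must lie below the new one and some above it, the new point can be put
into one of the two components. -/
theorem ComposedBy.left_or_right {b : Bool} (hST : ComposedBy b r S T)
    (hPQ : ∀ p ∈ S ∪ T, p ∈ P → ∀ q ∈ S ∪ T, q ∈ Q → r p q)
    (hP : ∃ p ∈ S ∪ T, p ∈ P) (hQ : ∃ q ∈ S ∪ T, q ∈ Q) :
    ((∀ x ∈ T, x ∉ P) ∧ ∀ x ∈ T, x ∈ Q → b) ∨ ((∀ x ∈ S, x ∈ P → b) ∧ ∀ x ∈ S, x ∉ Q) := by
  have hTS {p q : X} (hp : p ∈ T) (hpP : p ∈ P) (hq : q ∈ S) (hqQ : q ∈ Q) : False :=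
    (hST q hq p hp).2 (hPQ p (.inr hp) hpP q (.inl hq) hqQ)
  have hb {p q : X} (hp : p ∈ S) (hpP : p ∈ P) (hq : q ∈ T) (hqQ : q ∈ Q) : b :=
    (hST p hp q hq).1.1 (hPQ p (.inl hp) hpP q (.inr hq) hqQ)
  obtain ⟨p, hp | hp, hpP⟩ := hP
  · by_cases hPT : ∃ x ∈ T, x ∈ P
    · obtain ⟨p', hp', hpP'⟩ := hPT
      obtain ⟨q, hq | hq, hqQ⟩ := hQ
      · exact (hTS hp' hpP' hq hqQ).elim
      · exact .inr ⟨fun x hx hxP => hb hx hxP hq hqQ, fun x hx hxQ => hTS hp' hpP' hx hxQ⟩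
    · exact .inl ⟨fun x hx hxP => hPT ⟨x, hx, hxP⟩, fun x hx hxQ => hb hp hpP hx hxQ⟩
  · obtain ⟨q, hq | hq, hqQ⟩ := hQ
    · exact (hTS hp hpP hq hqQ).elim
    · exact .inr ⟨fun x hx hxP => hb hx hxP hq hqQ, fun x hx hxQ => hTS hp hpP hx hxQ⟩

theorem IsSPOn.exists_isPointExtension (hS : IsSPOn r S) (hs : s ∉ S) (hdisj : Disjoint P Q)
    (hPQ : ∀ p ∈ S, p ∈ P → ∀ q ∈ S, q ∈ Q → r p q) : ∃ d, IsPointExtension r S s P Q d := by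
  induction hS with
  | empty => exact ⟨_, IsSPOn.empty.isPointExtension_top hs fun _ hx => hx.elim⟩
  | @single x hx =>
    by_cases hxQ : x ∈ Q
    · refine ⟨_, (IsSPOn.single hx).isPointExtension_bot hs ?_⟩
      rintro _ rfl hxP
      exact Set.disjoint_left.1 hdisj hxP hxQ
    · exact ⟨_, (IsSPOn.single hx).isPointExtension_top hs (by rintro _ rfl; exact hxQ)⟩
  | @comp b S T hS hT hST ihS ihT =>
    by_cases hQ : ∀ x ∈ S ∪ T, x ∉ Q
    · exact ⟨_, (hS.comp b hT hST).isPointExtension_top hs hQ⟩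
    by_cases hP : ∀ x ∈ S ∪ T, x ∉ P
    · exact ⟨_, (hS.comp b hT hST).isPointExtension_bot hs hP⟩
    push Not at hP hQ
    obtain ⟨hsS, hsT⟩ := not_or.1 hs
    have hTS (x : X) (hx : x ∈ T) : x ∉ S := hS.notMem_of_composedBy hST hx
    rcases hST.left_or_right hPQ hP hQ with ⟨hPT, hQT⟩ | ⟨hPS, hQS⟩
    · obtain ⟨d, hd⟩ := ihS hsS fun p hp hpP q hq => hPQ p (.inl hp) hpP q (.inl hq)
      refine ⟨_, hd.left hT hST ?_ hPT hQT⟩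
      rintro x hx (rfl | hxS)
      exacts [hsT hx, hTS x hx hxS]
    · obtain ⟨d, hd⟩ := ihT hsT fun p hp hpP q hq => hPQ p (.inr hp) hpP q (.inr hq)
      refine ⟨_, hd.right hS hST ?_ hPS hQS⟩
      rintro x (rfl | hx)
      exacts [hsS, hTS x hx]

end PointExtension

theorem IsSPOn.exists_extension_insert {X : Type*} [PartialOrder X] {r : X → X → Prop} {S : Set X}
    (hS : IsSPOn r S) (hle : ∀ x ∈ S, ∀ y ∈ S, x ≤ y → r x y) (s : X) :
    ∃ d : X → X → Prop, IsSPOn d (insert s S) ∧ (∀ x ∈ S, ∀ y ∈ S, (d x y ↔ r x y)) ∧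
      ∀ x ∈ insert s S, ∀ y ∈ insert s S, x ≤ y → d x y := by
  by_cases hs : s ∈ S
  · rw [Set.insert_eq_of_mem hs]
    exact ⟨r, hS, fun _ _ _ _ => Iff.rfl, hle⟩
  have hdisj : Disjoint (Set.Iio s) (Set.Ioi s) :=
    Set.disjoint_left.2 fun x hxs hsx => lt_asymm hxs hsx
  obtain ⟨d, hd⟩ := hS.exists_isPointExtension (s := s) hs hdisj
    fun p hp hps q hq hsq => hle p hp q hq (hps.trans hsq).le
  have hne {x : X} (hx : x ∈ S) : x ≠ s := fun hxs => hs (hxs ▸ hx)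
  refine ⟨d, hd.isSPOn, hd.agree, ?_⟩
  rintro x (rfl | hx) y (rfl | hy) hxy
  · exact hd.isSPOn.refl _ (.inl rfl)
  · exact hd.above y hy (hxy.lt_of_ne' (hne hy))
  · exact hd.below x hx (hxy.lt_of_ne (hne hx))
  · exact (hd.agree x hx y hy).2 (hle x hx y hy hxy)

end IsSPOn

/-! ### Pomsets and their restrictions -/

variable {A : Type}

/-- The pomset represented by a labelled poset. -/
abbrev LPoset.toPomset (u : LPoset A) : Pomset A := ⟦u⟧

theorem LPoset.toPomset_eq {u v : LPoset A} (f : u.carrier → v.carrier)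
    (hf : Function.Surjective f) (hle : ∀ x y, f x ≤ f y ↔ x ≤ y)
    (hlab : ∀ x, v.lab (f x) = u.lab x) : u.toPomset = v.toPomset :=
  Quotient.sound ⟨RelIso.ofSurjective (OrderEmbedding.ofMapLEIff f hle) hf, hlab⟩

/-- The order of the series (`b = true`) or parallel (`b = false`) composition. -/
def LPoset.compLe (b : Bool) (u v : LPoset A) :
    u.carrier ⊕ v.carrier → u.carrier ⊕ v.carrier → Prop
  | .inl x, .inl y => x ≤ y
  | .inr x, .inr y => x ≤ y
  | .inl _, .inr _ => b
  | .inr _, .inl _ => False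

/-- Series (`b = true`) or parallel (`b = false`) composition on the plain disjoint union, so
that both compositions can be treated at once. -/
def LPoset.compL (b : Bool) (u v : LPoset A) : LPoset A where
  carrier := u.carrier ⊕ v.carrier
  ord :=
    { le := LPoset.compLe b u v
      lt := fun x y => LPoset.compLe b u v x y ∧ ¬ LPoset.compLe b u v y x
      lt_iff_le_not_ge := fun _ _ => Iff.rfl
      le_refl := by rintro (x | x) <;> exact le_refl x
      le_trans := by
        rintro (x | x) (y | y) (z | z) hxy hyz <;>
          first | exact le_trans hxy hyz | exact hxy | exact hyz | exact hxy.elim | exact hyz.elim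
      le_antisymm := by
        rintro (x | x) (y | y) hxy hyx <;>
          first | exact congrArg _ (le_antisymm hxy hyx) | exact hxy.elim | exact hyx.elim }
  lab := Sum.elim u.lab v.lab

/-- Series (`b = true`) or parallel (`b = false`) composition of pomsets. -/
def Pomset.comp : Bool → Pomset A → Pomset A → Pomset A
  | true => Pomset.seq
  | false => Pomset.par

theorem LPoset.toPomset_compL (b : Bool) (u v : LPoset A) :
    (LPoset.compL b u v).toPomset = Pomset.comp b u.toPomset v.toPomset := by
  cases b with
  | true =>
    refine LPoset.toPomset_eq (v := u.seqL v) toLex toLex.surjective ?_ fun _ => rfl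
    rintro (x | x) (y | y)
    · exact Sum.Lex.inl_le_inl_iff
    · exact iff_of_true (Sum.Lex.inl_le_inr x y) rfl
    · exact iff_of_false Sum.Lex.not_inr_le_inl id
    · exact Sum.Lex.inr_le_inr_iff
  | false =>
    refine LPoset.toPomset_eq (v := u.parL v) id Function.surjective_id ?_ fun _ => rfl
    rintro (x | x) (y | y)
    · exact Sum.inl_le_inl_iff
    · exact iff_of_false Sum.not_inl_le_inr Bool.false_ne_true
    · exact iff_of_false Sum.not_inr_le_inl id
    · exact Sum.inr_le_inr_iff

theorem Pomset.IsSP.comp (b : Bool) {U V : Pomset A} (hU : U.IsSP) (hV : V.IsSP) :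
    (Pomset.comp b U V).IsSP := by
  cases b
  exacts [hU.par hV, hU.seq hV]

theorem Pomset.seq_assoc (U V W : Pomset A) :
    Pomset.seq (Pomset.seq U V) W = Pomset.seq U (Pomset.seq V W) := by
  induction U, V, W using Quotient.inductionOn₃ with | _ u v w
  refine Quotient.sound ⟨OrderIso.sumLexAssoc u.carrier v.carrier w.carrier, ?_⟩
  rintro ((x | x) | x) <;> rfl

/-- The pomset of the points of `S`. -/
noncomputable def LPoset.restrict (u : LPoset A) (S : Set u.carrier) : Pomset A :=
  LPoset.toPomset { carrier := S, fin := Fintype.ofFinite S, lab := fun x => u.lab x }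

section Restrict

variable (u : LPoset A)

theorem LPoset.restrict_univ : u.restrict Set.univ = u.toPomset :=
  LPoset.toPomset_eq Subtype.val (fun x => ⟨⟨x, trivial⟩, rfl⟩) (fun _ _ => Iff.rfl) fun _ => rfl

theorem LPoset.restrict_empty : u.restrict ∅ = Pomset.empty A :=
  LPoset.toPomset_eq (fun x => x.2.elim) (fun x => x.elim0) (fun x => x.2.elim) fun x => x.2.elim

theorem LPoset.restrict_singleton (x : u.carrier) :
    u.restrict {x} = Pomset.single (u.lab x) := by
  refine LPoset.toPomset_eq (v := LPoset.singleL (u.lab x)) (fun _ => PUnit.unit)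
    (fun _ => ⟨⟨x, rfl⟩, rfl⟩) ?_ ?_
  · rintro ⟨_, rfl⟩ ⟨_, rfl⟩
    exact iff_of_true le_rfl le_rfl
  · rintro ⟨_, rfl⟩
    rfl

theorem LPoset.restrict_union {b : Bool} {S T : Set u.carrier} (h : ComposedBy b (· ≤ ·) S T) :
    u.restrict (S ∪ T) = Pomset.comp b (u.restrict S) (u.restrict T) := by
  refine Eq.trans (Eq.symm ?_) (LPoset.toPomset_compL b _ _)
  refine LPoset.toPomset_eq
    (Sum.elim (fun x => ⟨x.1, .inl x.2⟩) fun x => ⟨x.1, .inr x.2⟩) ?_ ?_ ?_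
  · rintro ⟨x, hx | hx⟩
    exacts [⟨.inl ⟨x, hx⟩, rfl⟩, ⟨.inr ⟨x, hx⟩, rfl⟩]
  · rintro (x | x) (y | y)
    · exact Iff.rfl
    · exact (h x x.2 y y.2).1
    · exact iff_of_false (h y y.2 x x.2).2 id
    · exact Iff.rfl
  · rintro (x | x) <;> rfl

variable {u}

theorem LPoset.isSP_restrict {S : Set u.carrier} (hS : IsSPOn (· ≤ ·) S) :
    (u.restrict S).IsSP := by
  induction hS with
  | empty => rw [u.restrict_empty]; exact .empty
  | @single x => rw [u.restrict_singleton]; exact .single _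
  | comp b _ _ hST ihS ihT => rw [u.restrict_union hST]; exact ihS.comp b ihT

theorem LPoset.isSPOn_congr {v : LPoset A} (huv : u.toPomset = v.toPomset)
    (hu : IsSPOn (· ≤ ·) (Set.univ : Set u.carrier)) :
    IsSPOn (· ≤ ·) (Set.univ : Set v.carrier) := by
  obtain ⟨f, -⟩ := Quotient.exact huv
  rw [← f.surjective.range_eq, ← Set.image_univ]
  exact hu.image f fun x _ y _ => f.le_iff_le

theorem LPoset.isSPOn_compL (b : Bool) {v : LPoset A}
    (hu : IsSPOn (· ≤ ·) (Set.univ : Set u.carrier))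
    (hv : IsSPOn (· ≤ ·) (Set.univ : Set v.carrier)) :
    IsSPOn (· ≤ ·) (Set.univ : Set (LPoset.compL b u v).carrier) := by
  have huniv : (Set.univ : Set (LPoset.compL b u v).carrier) =
      Sum.inl '' Set.univ ∪ Sum.inr '' Set.univ := by
    rw [Set.image_univ, Set.image_univ]
    exact Set.range_inl_union_range_inr.symm
  rw [huniv]
  refine .comp b (hu.image _ fun _ _ _ _ => Iff.rfl) (hv.image _ fun _ _ _ _ => Iff.rfl) ?_
  rintro _ ⟨x, -, rfl⟩ _ ⟨y, -, rfl⟩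
  exact ⟨Iff.rfl, id⟩

theorem Pomset.IsSP.exists_isSPOn {U : Pomset A} (hU : U.IsSP) :
    ∃ u : LPoset A, u.toPomset = U ∧ IsSPOn (· ≤ ·) (Set.univ : Set u.carrier) := by
  have hcomp (b : Bool) {U V : Pomset A} :
      (∃ u : LPoset A, u.toPomset = U ∧ IsSPOn (· ≤ ·) (Set.univ : Set u.carrier)) →
      (∃ v : LPoset A, v.toPomset = V ∧ IsSPOn (· ≤ ·) (Set.univ : Set v.carrier)) →
      ∃ w : LPoset A, w.toPomset = Pomset.comp b U V ∧
        IsSPOn (· ≤ ·) (Set.univ : Set w.carrier) := by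
    rintro ⟨u, rfl, hu⟩ ⟨v, rfl, hv⟩
    exact ⟨_, LPoset.toPomset_compL b u v, LPoset.isSPOn_compL b hu hv⟩
  induction hU with
  | empty =>
    refine ⟨LPoset.emptyL A, rfl, ?_⟩
    rw [Set.univ_eq_empty_iff.2 (inferInstanceAs (IsEmpty (Fin 0)))]
    exact .empty
  | single a =>
    refine ⟨LPoset.singleL a, rfl, ?_⟩
    have huniv : (Set.univ : Set (LPoset.singleL a).carrier) = {PUnit.unit} :=
      Set.ext fun _ => iff_of_true trivial rfl
    rw [huniv]
    exact .single le_rfl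
  | seq _ _ ihU ihV => exact hcomp true ihU ihV
  | par _ _ ihU ihV => exact hcomp false ihU ihV

theorem LPoset.isSP_iff : u.toPomset.IsSP ↔ IsSPOn (· ≤ ·) (Set.univ : Set u.carrier) := by
  refine ⟨fun hu => ?_, fun hu => ?_⟩
  · obtain ⟨v, hvu, hv⟩ := hu.exists_isSPOn
    exact LPoset.isSPOn_congr hvu hv
  · rw [← u.restrict_univ]
    exact LPoset.isSP_restrict hu

end Restrict

/-! ### Gischer's theorem -/

section Gischer

variable {u v : LPoset A}

theorem spSub_restrict_of_composedBy {S T : Set v.carrier} (hV : IsSPOn (· ≤ ·) (S ∪ T))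
    (h : ComposedBy true (· ≤ ·) S T) :
    spSub (Pomset.seq (v.restrict S) (v.restrict T)) (v.restrict (S ∪ T)) := by
  rw [v.restrict_union h]
  exact .refl (.seq (LPoset.isSP_restrict (hV.mono Set.subset_union_left))
    (LPoset.isSP_restrict (hV.mono Set.subset_union_right)))

theorem spSub_restrict_par {V W S T : Set v.carrier} (hVW : ComposedBy false (· ≤ ·) V W)
    (hV : IsSPOn (· ≤ ·) V) (hW : IsSPOn (· ≤ ·) W) (hST : S ∪ T = V ∪ W)
    (hsubV : spSub (Pomset.seq (v.restrict (S ∩ V)) (v.restrict (T ∩ V))) (v.restrict V))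
    (hsubW : spSub (Pomset.seq (v.restrict (S ∩ W)) (v.restrict (T ∩ W))) (v.restrict W)) :
    spSub (Pomset.seq (v.restrict S) (v.restrict T)) (v.restrict (V ∪ W)) := by
  have hpar (R : Set v.carrier) (hR : R ⊆ V ∪ W) :
      v.restrict R = Pomset.par (v.restrict (R ∩ V)) (v.restrict (R ∩ W)) := by
    conv_lhs => rw [← Set.inter_eq_left.2 hR, Set.inter_union_distrib_left]
    exact v.restrict_union fun x hx y hy => hVW x hx.2 y hy.2
  rw [hpar S (hST ▸ Set.subset_union_left), hpar T (hST ▸ Set.subset_union_right),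
    v.restrict_union hVW]
  have hsp {R P : Set v.carrier} (hP : IsSPOn (· ≤ ·) P) : (v.restrict (R ∩ P)).IsSP :=
    LPoset.isSP_restrict (hP.mono Set.inter_subset_right)
  exact (spSub.exch (hsp hV) (hsp hW) (hsp hV) (hsp hW)).trans (hsubV.parCong hsubW)

theorem spSub_restrict_seq {V W S T : Set v.carrier} (hVW : ComposedBy true (· ≤ ·) V W)
    (hV : IsSPOn (· ≤ ·) V) (hW : IsSPOn (· ≤ ·) W) (hST : S ∪ T = V ∪ W)
    (hnle : ∀ x ∈ S, ∀ y ∈ T, ¬ y ≤ x)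
    (hsubV : spSub (Pomset.seq (v.restrict (S ∩ V)) (v.restrict (T ∩ V))) (v.restrict V))
    (hsubW : spSub (Pomset.seq (v.restrict (S ∩ W)) (v.restrict (T ∩ W))) (v.restrict W)) :
    spSub (Pomset.seq (v.restrict S) (v.restrict T)) (v.restrict (V ∪ W)) := by
  have hmem (x : v.carrier) : x ∈ S ∨ x ∈ T ↔ x ∈ V ∨ x ∈ W := Set.ext_iff.1 hST x
  rw [v.restrict_union hVW]
  by_cases hTV : ∃ t ∈ T, t ∈ V
  · obtain ⟨t, htT, htV⟩ := hTV
    have hSW (x : v.carrier) (hxS : x ∈ S) (hxW : x ∈ W) : False :=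
      hnle x hxS t htT ((hVW t htV x hxW).1.2 rfl)
    have hT : T = T ∩ V ∪ W := by ext x; grind
    have hSV : S ⊆ V := by intro x hx; grind
    have hseq : v.restrict T = Pomset.seq (v.restrict (T ∩ V)) (v.restrict W) := by
      conv_lhs => rw [hT]
      exact v.restrict_union fun x hx y hy => hVW x hx.2 y hy
    rw [Set.inter_eq_left.2 hSV] at hsubV
    rw [hseq, ← Pomset.seq_assoc]
    exact hsubV.seqCong (.refl (LPoset.isSP_restrict hW))
  · have hS : S = V ∪ S ∩ W := by ext x; grind
    have hTW : T ⊆ W := by intro x hx; grind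
    have hseq : v.restrict S = Pomset.seq (v.restrict V) (v.restrict (S ∩ W)) := by
      conv_lhs => rw [hS]
      exact v.restrict_union fun x hx y hy => hVW x hx y hy.2
    rw [Set.inter_eq_left.2 hTW] at hsubW
    rw [hseq, Pomset.seq_assoc]
    exact .seqCong (.refl (LPoset.isSP_restrict hV)) hsubW

theorem spSub_restrict_of_cut {V : Set v.carrier} (hV : IsSPOn (· ≤ ·) V) {S T : Set v.carrier}
    (hST : S ∪ T = V) (hnle : ∀ x ∈ S, ∀ y ∈ T, ¬ y ≤ x) :
    spSub (Pomset.seq (v.restrict S) (v.restrict T)) (v.restrict V) := by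
  induction hV generalizing S T with
  | empty =>
    have hST' := Set.union_empty_iff.1 hST
    rw [← hST]
    refine spSub_restrict_of_composedBy (hST ▸ .empty) fun x hx => ?_
    rw [hST'.1] at hx
    exact hx.elim
  | @single z hz =>
    rw [← hST]
    refine spSub_restrict_of_composedBy (hST ▸ .single hz) fun x hx y hy => ?_
    obtain rfl : x = z := hST.subset (.inl hx)
    obtain rfl : y = x := hST.subset (.inr hy)
    exact (hnle y hx y hy le_rfl).elim
  | @comp b V W hV hW hVW ihV ihW =>
    have hcut {P : Set v.carrier} (hP : P ⊆ V ∪ W) : S ∩ P ∪ T ∩ P = P := by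
      rw [← Set.union_inter_distrib_right, hST, Set.inter_eq_right.2 hP]
    have hsubV := ihV (hcut Set.subset_union_left) fun x hx y hy => hnle x hx.1 y hy.1
    have hsubW := ihW (hcut Set.subset_union_right) fun x hx y hy => hnle x hx.1 y hy.1
    cases b with
    | true => exact spSub_restrict_seq hVW hV hW hST hnle hsubV hsubW
    | false => exact spSub_restrict_par hVW hV hW hST hsubV hsubW

theorem spSub_restrict_preimage (f : v.carrier ≃ u.carrier) (hlab : ∀ x, u.lab (f x) = v.lab x)
    (hf : Monotone f) (hv : IsSPOn (· ≤ ·) (Set.univ : Set v.carrier)) {S : Set u.carrier}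
    (hS : IsSPOn (· ≤ ·) S) : spSub (u.restrict S) (v.restrict (f ⁻¹' S)) := by
  induction hS with
  | empty => rw [Set.preimage_empty, u.restrict_empty, v.restrict_empty]; exact .refl .empty
  | @single x =>
    obtain ⟨x, rfl⟩ := f.surjective x
    rw [← Set.image_singleton, f.preimage_image, Set.image_singleton, u.restrict_singleton,
      v.restrict_singleton, hlab]
    exact .refl (.single _)
  | @comp b S T _ _ hST ihS ihT =>
    rw [u.restrict_union hST, Set.preimage_union]
    cases b with
    | true =>
      exact (ihS.seqCong ihT).trans <| spSub_restrict_of_cut (hv.mono (Set.subset_univ _)) rfl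
        fun x hx y hy hyx => (hST _ hx _ hy).2 (hf hyx)
    | false =>
      have hpar : ComposedBy false (· ≤ ·) (f ⁻¹' S) (f ⁻¹' T) := fun x hx y hy =>
        ⟨iff_of_false (fun hxy => Bool.false_ne_true ((hST _ hx _ hy).1.1 (hf hxy)))
          Bool.false_ne_true, fun hyx => (hST _ hx _ hy).2 (hf hyx)⟩
      rw [v.restrict_union hpar]
      exact ihS.parCong ihT

/-- Gischer's theorem: between series-parallel pomsets, subsumption is generated by the
exchange law. -/
theorem spSub_of_sub {U V : Pomset A} (hU : U.IsSP) (hV : V.IsSP) (hUV : U.sub V) :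
    spSub U V := by
  induction U, V using Quotient.inductionOn₂ with | _ u v
  obtain ⟨f, hlab, hf⟩ := hUV
  have hsub := spSub_restrict_preimage f hlab (fun x y => hf x y) (LPoset.isSP_iff.1 hV)
    (LPoset.isSP_iff.1 hU)
  rwa [Set.preimage_univ, u.restrict_univ, v.restrict_univ] at hsub

theorem spSub.isSP {U V : Pomset A} (h : spSub U V) : U.IsSP ∧ V.IsSP := by
  induction h with
  | refl hU => exact ⟨hU, hU⟩
  | trans _ _ ihUV ihVW => exact ⟨ihUV.1, ihVW.2⟩
  | seqCong _ _ ih ih' => exact ⟨ih.1.seq ih'.1, ih.2.seq ih'.2⟩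
  | parCong _ _ ih ih' => exact ⟨ih.1.par ih'.1, ih.2.par ih'.2⟩
  | exch hU hV hW hX => exact ⟨(hU.par hV).seq (hW.par hX), (hU.seq hW).par (hV.seq hX)⟩

end Gischer

/-! ### Contexts -/

section Contexts

variable {c : LPoset (Option A)} {s : c.carrier}

theorem LPoset.insL_inl_le_inr (hc : c.uniqueStarL) (hs : c.lab s = none) {w : LPoset A}
    (x : {x : c.carrier // c.lab x ≠ none}) (y : w.carrier) :
    c.insLe w (.inl x) (.inr y) ↔ x.1 ≤ s :=
  ⟨fun ⟨_, _, ht, h⟩ => hc.unique hs ht ▸ h, fun h => ⟨hc, s, hs, h⟩⟩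

theorem LPoset.insL_inr_le_inl (hc : c.uniqueStarL) (hs : c.lab s = none) {w : LPoset A}
    (x : w.carrier) (y : {y : c.carrier // c.lab y ≠ none}) :
    c.insLe w (.inr x) (.inl y) ↔ s ≤ y.1 :=
  ⟨fun ⟨_, _, ht, h⟩ => hc.unique hs ht ▸ h, fun h => ⟨hc, s, hs, h⟩⟩

/-- The projection of `C[W]` onto `C` that sends the points of `W` to the star `s`. -/
def LPoset.collapse (c : LPoset (Option A)) (s : c.carrier) (w : LPoset A) :
    (c.insL w).carrier → c.carrier :=
  Sum.elim Subtype.val fun _ => s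

theorem LPoset.collapse_le_collapse (hc : c.uniqueStarL) (hs : c.lab s = none) {w : LPoset A}
    {p q : (c.insL w).carrier} (hpq : c.collapse s w p ≠ c.collapse s w q) :
    p ≤ q ↔ c.collapse s w p ≤ c.collapse s w q := by
  rcases p with p | p <;> rcases q with q | q
  · exact Iff.rfl
  · exact LPoset.insL_inl_le_inr hc hs p q
  · exact LPoset.insL_inr_le_inl hc hs p q
  · exact absurd rfl hpq

theorem LPoset.collapse_injective (hs : c.lab s = none) (w : LPoset A) [Subsingleton w.carrier] :
    Function.Injective (c.collapse s w) := by
  rintro (p | p) (q | q) hpq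
  · exact congrArg _ (Subtype.ext hpq)
  · exact absurd ((congrArg c.lab hpq).trans hs) p.2
  · exact absurd ((congrArg c.lab hpq).symm.trans hs) q.2
  · exact congrArg _ (Subsingleton.elim p q)

theorem LPoset.insert_range_collapse (hc : c.uniqueStarL) (hs : c.lab s = none) (w : LPoset A) :
    insert s (Set.range (c.collapse s w)) = Set.univ := by
  refine Set.eq_univ_of_forall fun x => ?_
  by_cases hx : c.lab x = none
  · exact .inl (hc.unique hx hs)
  · exact .inr ⟨.inl ⟨x, hx⟩, rfl⟩

theorem LPoset.collapse_preimage_star (hs : c.lab s = none) (w : LPoset A) :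
    c.collapse s w ⁻¹' {s} = Sum.inr '' Set.univ := by
  ext (p | p)
  · refine iff_of_false (fun hp => p.2 ((congrArg c.lab hp).trans hs)) ?_
    rintro ⟨q, -, hq⟩
    exact Sum.inr_ne_inl hq
  · exact iff_of_true rfl ⟨p, trivial, rfl⟩

theorem LPoset.collapse_preimage_of_ne (hs : c.lab s = none) (w : LPoset A) {x : c.carrier}
    (hx : c.lab x ≠ none) : c.collapse s w ⁻¹' {x} = {Sum.inl ⟨x, hx⟩} := by
  ext (p | p)
  · exact ⟨fun hp => congrArg Sum.inl (Subtype.ext hp), fun hp => by cases hp; rfl⟩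
  · exact iff_of_false (fun hp => hx ((congrArg c.lab hp).symm.trans hs)) Sum.inr_ne_inl

theorem Pomset.IsSPCtx.isSP_ins {C : Pomset (Option A)} (hC : C.IsSPCtx) {W : Pomset A}
    (hW : W.IsSP) : (C.ins W).IsSP := by
  induction C, W using Quotient.inductionOn₂ with | _ c w
  obtain ⟨hc, hCsp⟩ := hC
  obtain ⟨s, hs, -⟩ := id hc
  have huniv : ⋃ x ∈ Set.univ, c.collapse s w ⁻¹' {x} = Set.univ := by
    rw [← Set.preimage_iUnion₂, Set.biUnion_of_singleton, Set.preimage_univ]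
  refine (LPoset.isSP_iff (u := c.insL w)).2 ?_
  rw [← huniv]
  refine (LPoset.isSP_iff.1 hCsp).biUnion (fun x _ => ?_) ?_
  · by_cases hx : c.lab x = none
    · rw [hc.unique hx hs, LPoset.collapse_preimage_star hs]
      exact (LPoset.isSP_iff.1 hW).image _ fun _ _ _ _ => Iff.rfl
    · rw [LPoset.collapse_preimage_of_ne hs w hx]
      exact .single le_rfl
  · rintro x - y - hxy p rfl q rfl
    exact LPoset.collapse_le_collapse hc hs hxy

theorem Pomset.ins_starCtx (W : Pomset A) : (starCtx A).ins W = W := by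
  induction W using Quotient.inductionOn with | _ w
  refine Eq.symm <| LPoset.toPomset_eq (v := (LPoset.singleL none).insL w) Sum.inr ?_
    (fun _ _ => Iff.rfl) fun _ => rfl
  rintro (⟨x, hx⟩ | x)
  exacts [absurd rfl hx, ⟨x, rfl⟩]

theorem LPoset.uniqueStarL_compL_left (b : Bool) (u : LPoset A) (hc : c.uniqueStarL) :
    (LPoset.compL b (u.mapL some) c).uniqueStarL := by
  obtain ⟨s, hs, huniq⟩ := hc
  refine ⟨.inr s, hs, ?_⟩
  rintro (x | x) hx
  exacts [absurd hx (Option.some_ne_none _), congrArg _ (huniq x hx)]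

theorem LPoset.uniqueStarL_compL_right (b : Bool) (u : LPoset A) (hc : c.uniqueStarL) :
    (LPoset.compL b c (u.mapL some)).uniqueStarL := by
  obtain ⟨s, hs, huniq⟩ := hc
  refine ⟨.inl s, hs, ?_⟩
  rintro (x | x) hx
  exacts [congrArg _ (huniq x hx), absurd hx (Option.some_ne_none _)]

theorem LPoset.insL_compL_left (b : Bool) (u : LPoset A) (hc : c.uniqueStarL) (w : LPoset A) :
    ((LPoset.compL b (u.mapL some) c).insL w).toPomset =
      (LPoset.compL b u (c.insL w)).toPomset := by
  have hc' := LPoset.uniqueStarL_compL_left b u hc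
  obtain ⟨s, hs, -⟩ := id hc
  let f : (LPoset.compL b u (c.insL w)).carrier →
      ((LPoset.compL b (u.mapL some) c).insL w).carrier
    | .inl x => .inl ⟨.inl x, Option.some_ne_none _⟩
    | .inr (.inl x) => .inl ⟨.inr x.1, x.2⟩
    | .inr (.inr x) => .inr x
  refine Eq.symm <| LPoset.toPomset_eq f ?_ ?_ ?_
  · rintro (⟨x | x, hx⟩ | x)
    exacts [⟨.inl x, rfl⟩, ⟨.inr (.inl ⟨x, hx⟩), rfl⟩, ⟨.inr (.inr x), rfl⟩]
  · have hs' : (LPoset.compL b (u.mapL some) c).lab (Sum.inr s) = none := hs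
    have hlr := LPoset.insL_inl_le_inr hc' hs' (w := w)
    have hrl := LPoset.insL_inr_le_inl hc' hs' (w := w)
    rintro (x | x | x) (y | y | y)
    · exact Iff.rfl
    · exact Iff.rfl
    · exact hlr _ y
    · exact Iff.rfl
    · exact Iff.rfl
    · exact (hlr _ y).trans (LPoset.insL_inl_le_inr hc hs x y).symm
    · exact hrl x _
    · exact (hrl x _).trans (LPoset.insL_inr_le_inl hc hs x y).symm
    · exact Iff.rfl
  · rintro (x | x | x) <;> rfl

theorem LPoset.insL_compL_right (b : Bool) (u : LPoset A) (hc : c.uniqueStarL) (w : LPoset A) :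
    ((LPoset.compL b c (u.mapL some)).insL w).toPomset =
      (LPoset.compL b (c.insL w) u).toPomset := by
  have hc' := LPoset.uniqueStarL_compL_right b u hc
  obtain ⟨s, hs, -⟩ := id hc
  let f : (LPoset.compL b (c.insL w) u).carrier →
      ((LPoset.compL b c (u.mapL some)).insL w).carrier
    | .inl (.inl x) => .inl ⟨.inl x.1, x.2⟩
    | .inl (.inr x) => .inr x
    | .inr x => .inl ⟨.inr x, Option.some_ne_none _⟩
  refine Eq.symm <| LPoset.toPomset_eq f ?_ ?_ ?_
  · rintro (⟨x | x, hx⟩ | x)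
    exacts [⟨.inl (.inl ⟨x, hx⟩), rfl⟩, ⟨.inr x, rfl⟩, ⟨.inl (.inr x), rfl⟩]
  · have hs' : (LPoset.compL b c (u.mapL some)).lab (Sum.inl s) = none := hs
    have hlr := LPoset.insL_inl_le_inr hc' hs' (w := w)
    have hrl := LPoset.insL_inr_le_inl hc' hs' (w := w)
    rintro ((x | x) | x) ((y | y) | y)
    · exact Iff.rfl
    · exact (hlr _ y).trans (LPoset.insL_inl_le_inr hc hs x y).symm
    · exact Iff.rfl
    · exact (hrl x _).trans (LPoset.insL_inr_le_inl hc hs x y).symm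
    · exact Iff.rfl
    · exact hrl x _
    · exact Iff.rfl
    · exact hlr _ y
    · exact Iff.rfl
  · rintro ((x | x) | x) <;> rfl

theorem Pomset.IsSP.map {B : Type} (f : A → B) {U : Pomset A} (hU : U.IsSP) :
    (U.map f).IsSP := by
  induction U using Quotient.inductionOn with | _ u
  exact (LPoset.isSP_iff (u := u.mapL f)).2 ((LPoset.isSP_iff (u := u)).1 hU)

theorem Pomset.IsSPCtx.exists_comp_left (b : Bool) {C : Pomset (Option A)} (hC : C.IsSPCtx)
    {U : Pomset A} (hU : U.IsSP) :
    ∃ D : Pomset (Option A), D.IsSPCtx ∧ ∀ W, D.ins W = Pomset.comp b U (C.ins W) := by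
  induction U, C using Quotient.inductionOn₂ with | _ u c
  obtain ⟨hc, hCsp⟩ := hC
  refine ⟨(LPoset.compL b (u.mapL some) c).toPomset,
    ⟨LPoset.uniqueStarL_compL_left b u hc, ?_⟩, fun W => ?_⟩
  · rw [LPoset.toPomset_compL]
    exact (hU.map some).comp b hCsp
  · induction W using Quotient.inductionOn with | _ w
    exact (LPoset.insL_compL_left b u hc w).trans (LPoset.toPomset_compL b _ _)

theorem Pomset.IsSPCtx.exists_comp_right (b : Bool) {C : Pomset (Option A)} (hC : C.IsSPCtx)
    {U : Pomset A} (hU : U.IsSP) :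
    ∃ D : Pomset (Option A), D.IsSPCtx ∧ ∀ W, D.ins W = Pomset.comp b (C.ins W) U := by
  induction U, C using Quotient.inductionOn₂ with | _ u c
  obtain ⟨hc, hCsp⟩ := hC
  refine ⟨(LPoset.compL b c (u.mapL some)).toPomset,
    ⟨LPoset.uniqueStarL_compL_right b u hc, ?_⟩, fun W => ?_⟩
  · rw [LPoset.toPomset_compL]
    exact Pomset.IsSP.comp b hCsp (hU.map some)
  · induction W using Quotient.inductionOn with | _ w
    exact (LPoset.insL_compL_right b u hc w).trans (LPoset.toPomset_compL b _ _)

/-- The functions on pomsets given by plugging into a series-parallel context. -/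
inductive Frame : (Pomset A → Pomset A) → Prop
  | id : Frame fun W => W
  | left (b : Bool) {U F} : U.IsSP → Frame F → Frame fun W => Pomset.comp b U (F W)
  | right (b : Bool) {U F} : U.IsSP → Frame F → Frame fun W => Pomset.comp b (F W) U

theorem Frame.comp {F G : Pomset A → Pomset A} (hF : Frame F) (hG : Frame G) :
    Frame fun W => F (G W) := by
  induction hF with
  | id => exact hG
  | left b hU _ ih => exact .left b hU ih
  | right b hU _ ih => exact .right b hU ih

theorem Frame.exists_ctx {F : Pomset A → Pomset A} (hF : Frame F) :
    ∃ C : Pomset (Option A), C.IsSPCtx ∧ ∀ W, C.ins W = F W := by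
  induction hF with
  | id => exact ⟨starCtx A, ⟨⟨PUnit.unit, rfl, fun _ _ => rfl⟩, .single _⟩, Pomset.ins_starCtx⟩
  | left b hU _ ih =>
    obtain ⟨C, hC, hCF⟩ := ih
    simpa only [hCF] using hC.exists_comp_left b hU
  | right b hU _ ih =>
    obtain ⟨C, hC, hCF⟩ := ih
    simpa only [hCF] using hC.exists_comp_right b hU

end Contexts

section Terms

theorem Pomset.IsSP.exists_term_lang_eq {U : Pomset A} (hU : U.IsSP) :
    ∃ e : Term A, e.lang = {U} := by
  induction hU with
  | empty => exact ⟨.one, rfl⟩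
  | single a => exact ⟨.var a, rfl⟩
  | seq _ _ ihU ihV =>
    obtain ⟨e, he⟩ := ihU
    obtain ⟨f, hf⟩ := ihV
    exact ⟨.seq e f, Set.ext fun W => by simp [Term.lang, Lang.seq, he, hf]⟩
  | par _ _ ihU ihV =>
    obtain ⟨e, he⟩ := ihU
    obtain ⟨f, hf⟩ := ihV
    exact ⟨.par e f, Set.ext fun W => by simp [Term.lang, Lang.par, he, hf]⟩

theorem Term.isSP_of_mem_lang (e : Term A) {U : Pomset A} (hU : U ∈ e.lang) : U.IsSP := by
  induction e generalizing U with
  | zero => exact hU.elim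
  | one => cases hU; exact .empty
  | var a => cases hU; exact .single a
  | add e f ihe ihf => exact hU.elim ihe ihf
  | seq e f ihe ihf => obtain ⟨V, hV, W, hW, rfl⟩ := hU; exact (ihe hV).seq (ihf hW)
  | par e f ihe ihf => obtain ⟨V, hV, W, hW, rfl⟩ := hU; exact (ihe hV).par (ihf hW)
  | star e ih =>
    obtain ⟨n, hn⟩ := Set.mem_iUnion.1 hU
    clear hU
    induction n generalizing U with
    | zero => cases hn; exact .empty
    | succ n ihn => obtain ⟨V, hV, W, hW, rfl⟩ := hn; exact (ihn hV).seq (ih hW)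

end Terms

section Subsumption

theorem Pomset.sub_ins {U V : Pomset A} (C : Pomset (Option A)) (hUV : U.sub V) :
    (C.ins U).sub (C.ins V) := by
  induction U, V using Quotient.inductionOn₂ with | _ u v
  induction C using Quotient.inductionOn with | _ c
  obtain ⟨f, hlab, hf⟩ := hUV
  refine ⟨Equiv.sumCongr (Equiv.refl _) f, ?_, ?_⟩
  · rintro (x | x)
    exacts [rfl, hlab x]
  · rintro (x | x) (y | y) hxy
    exacts [hxy, hxy, hxy, hf x y hxy]

theorem Pomset.sub_exch (U V W X : Pomset A) :
    (Pomset.seq (Pomset.par U V) (Pomset.par W X)).sub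
      (Pomset.par (Pomset.seq U W) (Pomset.seq V X)) := by
  induction U, V using Quotient.inductionOn₂ with | _ u v
  induction W, X using Quotient.inductionOn₂ with | _ w x
  change (Pomset.comp true (Pomset.comp false u.toPomset v.toPomset)
    (Pomset.comp false w.toPomset x.toPomset)).sub
      (Pomset.comp false (Pomset.comp true u.toPomset w.toPomset)
        (Pomset.comp true v.toPomset x.toPomset))
  simp only [← LPoset.toPomset_compL]
  refine ⟨Equiv.sumSumSumComm _ _ _ _, ?_, ?_⟩
  · rintro ((p | p) | (p | p)) <;> rfl
  · rintro ((p | p) | (p | p)) ((q | q) | (q | q)) hpq <;>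
      first | exact hpq | exact rfl | exact absurd hpq Bool.false_ne_true

/-- The same points and labels with another order. -/
def LPoset.reord (c : LPoset A) (o : PartialOrder c.carrier) : LPoset A where
  carrier := c.carrier
  ord := o
  lab := c.lab

theorem LPoset.sub_ins_reord (c : LPoset (Option A)) {o : PartialOrder c.carrier}
    (ho : ∀ x y, c.ord.le x y → o.le x y) (W : Pomset A) :
    ((c.reord o).toPomset.ins W).sub (c.toPomset.ins W) := by
  induction W using Quotient.inductionOn with | _ w
  refine ⟨Equiv.refl _, fun _ => rfl, ?_⟩
  rintro (x | x) (y | y) hxy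
  · exact ho _ _ hxy
  · obtain ⟨hc, s, hs, hxs⟩ := hxy
    exact ⟨hc, s, hs, ho _ _ hxs⟩
  · obtain ⟨hc, s, hs, hsy⟩ := hxy
    exact ⟨hc, s, hs, ho _ _ hsy⟩
  · exact hxy

theorem LPoset.exists_reord {c : LPoset (Option A)} (hc : c.uniqueStarL) {u v : LPoset A}
    [Subsingleton v.carrier] (hu : u.toPomset.IsSP) (huv : u.subL (c.insL v)) :
    ∃ o : PartialOrder c.carrier, (∀ x y, c.ord.le x y → o.le x y) ∧
      (c.reord o).toPomset.IsSP ∧ (c.reord o).toPomset.ins v.toPomset = u.toPomset := by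
  obtain ⟨f, hlab, hf⟩ := huv
  obtain ⟨s, hs, -⟩ := id hc
  have hinj : Function.Injective (c.collapse s v) := LPoset.collapse_injective hs v
  let r : c.carrier → c.carrier → Prop :=
    Relation.Map (fun p q => f p ≤ f q) (c.collapse s v) (c.collapse s v)
  have hr (p q : (c.insL v).carrier) :
      r (c.collapse s v p) (c.collapse s v q) ↔ f p ≤ f q :=
    Relation.map_apply_apply hinj hinj _ p q
  have hrange : IsSPOn r (Set.range (c.collapse s v)) := by
    rw [← f.symm.surjective.range_comp, ← Set.image_univ]
    exact (LPoset.isSP_iff.1 hu).image _ fun x _ y _ => by simp [hr]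
  have hle : ∀ x ∈ Set.range (c.collapse s v), ∀ y ∈ Set.range (c.collapse s v),
      x ≤ y → r x y := by
    rintro _ ⟨p, rfl⟩ _ ⟨q, rfl⟩ hpq
    refine (hr p q).2 (hf p q ?_)
    rcases eq_or_ne p q with rfl | hne
    · exact le_rfl
    · exact (LPoset.collapse_le_collapse hc hs (hinj.ne hne)).2 hpq
  obtain ⟨d, hd, hdr, hled⟩ := hrange.exists_extension_insert hle s
  rw [LPoset.insert_range_collapse hc hs] at hd hled
  refine ⟨hd.partialOrder, fun x y => hled x trivial y trivial, LPoset.isSP_iff.2 hd, ?_⟩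
  refine LPoset.toPomset_eq (u := (c.reord hd.partialOrder).insL v) f f.surjective ?_ hlab
  intro p q
  refine (hr p q).symm.trans ((hdr _ ⟨p, rfl⟩ _ ⟨q, rfl⟩).symm.trans ?_)
  rcases eq_or_ne p q with rfl | hne
  · exact iff_of_true (hd.refl _ trivial) le_rfl
  · exact (LPoset.collapse_le_collapse (c := c.reord hd.partialOrder) hc hs (hinj.ne hne)).symm

theorem Pomset.IsSPCtx.exists_ins_eq_of_sub {C : Pomset (Option A)} (hC : C.IsSPCtx)
    {U V : Pomset A} (hU : U.IsSP) (hV : V = Pomset.empty A ∨ ∃ a, V = Pomset.single a)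
    (hUV : U.sub (C.ins V)) :
    ∃ D : Pomset (Option A), D.IsSPCtx ∧ D.ins V = U ∧ ∀ W, (D.ins W).sub (C.ins W) := by
  obtain ⟨v, rfl, hv⟩ : ∃ v : LPoset A, v.toPomset = V ∧ Subsingleton v.carrier := by
    rcases hV with rfl | ⟨a, rfl⟩
    · exact ⟨LPoset.emptyL A, rfl, inferInstanceAs (Subsingleton (Fin 0))⟩
    · exact ⟨LPoset.singleL a, rfl, inferInstanceAs (Subsingleton PUnit)⟩
  induction C, U using Quotient.inductionOn₂ with | _ c u
  obtain ⟨o, ho, hsp, hins⟩ := LPoset.exists_reord hC.1 hU hUV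
  exact ⟨(c.reord o).toPomset, ⟨hC.1, hsp⟩, hins, c.sub_ins_reord ho⟩

end Subsumption

/-! ### Closures -/

section Closure

theorem cl_subset_cl {H₀ H : HypSet A} (hH : H₀ ⊆ H) {L K : Lang A} (hK : K ⊆ cl H L) :
    cl H₀ K ⊆ cl H L := by
  intro U hU
  induction hU with
  | base hU => exact hK hU
  | step hef hC _ hU ih => exact closure.step (hH hef) hC ih hU

theorem mem_cl_exch_of_spSub {L : Lang A} {U V : Pomset A} (h : spSub U V)
    {F : Pomset A → Pomset A} (hF : Frame F) (hFV : F V ∈ cl (exch A) L) :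
    F U ∈ cl (exch A) L := by
  induction h generalizing F with
  | refl => exact hFV
  | trans _ _ ihUV ihVW => exact ihUV hF (ihVW hF hFV)
  | seqCong h h' ih ih' =>
    exact ih' (hF.comp (.left true h.isSP.1 .id)) (ih (hF.comp (.right true h'.isSP.2 .id)) hFV)
  | parCong h h' ih ih' =>
    exact ih' (hF.comp (.left false h.isSP.1 .id)) (ih (hF.comp (.right false h'.isSP.2 .id)) hFV)
  | exch hU hV hW hX =>
    obtain ⟨e, he⟩ := hU.exists_term_lang_eq
    obtain ⟨f, hf⟩ := hV.exists_term_lang_eq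
    obtain ⟨g, hg⟩ := hW.exists_term_lang_eq
    obtain ⟨k, hk⟩ := hX.exists_term_lang_eq
    obtain ⟨C, hC, hCF⟩ := hF.exists_ctx
    rw [← hCF] at hFV ⊢
    have hmem : (Term.seq (.par e f) (.par g k), Term.par (.seq e g) (.seq f k)) ∈ exch A :=
      ⟨e, f, g, k, rfl⟩
    refine closure.step hmem hC (fun Z hZ => ?_) ?_
    · simp only [Term.lang, Lang.par, Lang.seq, he, hf, hg, hk] at hZ
      obtain ⟨_, ⟨_, rfl, _, rfl, rfl⟩, _, ⟨_, rfl, _, rfl, rfl⟩, rfl⟩ := hZ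
      exact hFV
    · simp [Term.lang, Lang.par, Lang.seq, he, hf, hg, hk]

/-- Each step of the `H`-closure is replayed in a context with a stronger order. -/
theorem mem_cl_cl_exch_of_sub {H : HypSet A}
    (hH : ∀ p ∈ H, ∀ U ∈ p.1.lang, U = Pomset.empty A ∨ ∃ a, U = Pomset.single a)
    {L : Lang A} {U V : Pomset A} (hV : V ∈ cl H (cl (exch A) L)) (hVsp : V.IsSP)
    (hU : U.IsSP) (hUV : U.sub V) : U ∈ cl H (cl (exch A) L) := by
  induction hV generalizing U with
  | base hV => exact closure.base (mem_cl_exch_of_spSub (spSub_of_sub hU hVsp hUV) .id hV)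
  | @step e f hef C hC _ V hV ih =>
    obtain ⟨D, hD, rfl, hDC⟩ := hC.exists_ins_eq_of_sub hU (hH _ hef V hV) hUV
    refine closure.step hef hD (fun W hW => ?_) hV
    have hW' : W.IsSP := f.isSP_of_mem_lang hW
    exact ih W hW (hC.isSP_ins hW') (hD.isSP_ins hW') (hDC W)

theorem cl_union_exch {H : HypSet A}
    (hH : ∀ p ∈ H, ∀ U ∈ p.1.lang, U = Pomset.empty A ∨ ∃ a, U = Pomset.single a)
    (L : Lang A) : cl (H ∪ exch A) L = cl H (cl (exch A) L) := by
  refine Set.Subset.antisymm (fun U hU => ?_) ?_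
  · induction hU with
    | base hU => exact closure.base (closure.base hU)
    | @step e f hef C hC _ V hV ih =>
      rcases hef with hef | ⟨e₁, e₂, e₃, e₄, heq⟩
      · exact closure.step hef hC ih hV
      · obtain ⟨rfl, rfl⟩ := Prod.mk.inj heq
        obtain ⟨_, ⟨U₁, h₁, U₂, h₂, rfl⟩, _, ⟨U₃, h₃, U₄, h₄, rfl⟩, rfl⟩ := id hV
        have hright : Pomset.par (Pomset.seq U₁ U₃) (Pomset.seq U₂ U₄) ∈
            (Term.par (.seq e₁ e₃) (.seq e₂ e₄)).lang :=
          ⟨_, ⟨U₁, h₁, U₃, h₃, rfl⟩, _, ⟨U₂, h₂, U₄, h₄, rfl⟩, rfl⟩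
        exact mem_cl_cl_exch_of_sub hH (ih _ hright) (hC.isSP_ins (Term.isSP_of_mem_lang _ hright))
          (hC.isSP_ins (Term.isSP_of_mem_lang _ hV))
          (Pomset.sub_ins C (Pomset.sub_exch U₁ U₂ U₃ U₄))
  · exact cl_subset_cl Set.subset_union_left
      (cl_subset_cl Set.subset_union_right fun U hU => closure.base hU)

end Closure

theorem factorise_exch_general {A : Type} {H : HypSet A}
    (hH : ∀ p ∈ H, ∀ U ∈ p.1.lang, U = Pomset.empty A ∨ ∃ a, U = Pomset.single a) :
    Implies (H ∪ exch A) (exch A) ∧ Implies (H ∪ exch A) H ∧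
      ∀ L : Lang A, cl (H ∪ exch A) L = cl H (cl (exch A) L) :=
  ⟨fun _ hp => .hyp (.inr hp), fun _ hp => .hyp (.inl hp), cl_union_exch hH⟩

/-- **Factoring the exchange law**: if every hypothesis of `H` has left-hand side `1` or
a letter, then `H ∪ exch` factorises into `exch` and `H`. -/
theorem factorise_exch (A : Type) (H : HypSet A)
    (hH : ∀ p ∈ H, p.1 = Term.one ∨ ∃ a : A, p.1 = Term.var a) :
    Factorises (H ∪ exch A) (exch A) H := by
  obtain ⟨hexch, hHyp, hcl⟩ := factorise_exch_general fun p hp U hU =>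
    (hH p hp).imp (fun he => by rwa [he] at hU) fun ⟨a, he⟩ => ⟨a, by rwa [he] at hU⟩
  exact ⟨hexch, hHyp, fun L _ => hcl L⟩

end CKAH
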